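/- Let G be a commutative group and h : G → ℍˣ a group homomorphism into the multiplicative group of nonzero quaternions. Then there exists q ∈ ℍˣ such that q⁻¹·h(g)·q ∈ ℂˣ for every g ∈ G. (This is the claim of Section 4.1 that, for a discrete torus, every conjugacy class in Hom(Γ, ℍˣ)/ℍˣ of quaternionic monodromy representations of the abelian group Γ of deck transformations contains a complex representation.) -/

import Mathlib

noncomputable section

/-- The quaternions. -/
abbrev H : Type := Quaternion ℝ

/-- The embedding of `ℂ` into the quaternions as the real subalgebra spanned by `1` and `i`. -/
def toH (z : ℂ) : H := ⟨z.re, z.im, 0, 0⟩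

@[simp] theorem toH_re (z : ℂ) : (toH z).re = z.re := rfl

@[simp] theorem toH_imI (z : ℂ) : (toH z).imI = z.im := rfl

@[simp] theorem toH_imJ (z : ℂ) : (toH z).imJ = 0 := rfl

@[simp] theorem toH_imK (z : ℂ) : (toH z).imK = 0 := rfl

/-- A quaternion with nonzero imaginary part is conjugate to a complex number which is not real. -/
theorem exists_unit_mul_eq_mul_toH (a : H) (ha : ¬ (a.imI = 0 ∧ a.imJ = 0 ∧ a.imK = 0)) :
    ∃ (q : Hˣ) (w : ℂ), w.im ≠ 0 ∧ a * (q : H) = q * toH w := by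
  by_cases hcd : a.imJ = 0 ∧ a.imK = 0
  · refine ⟨1, ⟨a.re, a.imI⟩, fun hI => ha ⟨hI, hcd⟩, ?_⟩
    rw [Units.val_one, mul_one, one_mul]
    ext <;> simp [hcd]
  · have hpos : 0 < a.imI ^ 2 + a.imJ ^ 2 + a.imK ^ 2 := by
      rcases not_and_or.mp hcd with h | h <;> positivity
    have hr := Real.sqrt_pos.mpr hpos
    have hsq := Real.sq_sqrt hpos.le
    set r := √(a.imI ^ 2 + a.imJ ^ 2 + a.imK ^ 2)
    obtain ⟨q, hqR, hqI, hqJ, hqK⟩ :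
        ∃ q : H, q.re = 0 ∧ q.imI = a.imI + r ∧ q.imJ = a.imJ ∧ q.imK = a.imK :=
      ⟨⟨0, a.imI + r, a.imJ, a.imK⟩, rfl, rfl, rfl, rfl⟩
    have hq : q ≠ 0 := by
      rintro rfl
      exact hcd ⟨hqJ.symm, hqK.symm⟩
    refine ⟨Units.mk0 q hq, ⟨a.re, r⟩, hr.ne', ?_⟩
    rw [Units.val_mk0]
    ext <;> simp only [Quaternion.re_mul, Quaternion.imI_mul, Quaternion.imJ_mul,
      Quaternion.imK_mul, toH_re, toH_imI, toH_imJ, toH_imK, hqR, hqI, hqJ, hqK] <;> linarith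

/-- A quaternion commuting with a complex number which is not real is complex. -/
theorem exists_eq_toH_of_commute (y : H) (w : ℂ) (hw : w.im ≠ 0) (h : Commute y (toH w)) :
    ∃ z : ℂ, y = toH z := by
  have hJ := congrArg (fun x : H => x.imJ) h.eq
  have hK := congrArg (fun x : H => x.imK) h.eq
  simp only [Quaternion.imJ_mul, Quaternion.imK_mul, toH_re, toH_imI, toH_imJ, toH_imK] at hJ hK
  refine ⟨⟨y.re, y.imI⟩, ?_⟩
  ext
  · rfl
  · rfl
  · exact (mul_eq_zero.mp (by linarith : w.im * y.imJ = 0)).resolve_left hw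
  · exact (mul_eq_zero.mp (by linarith : w.im * y.imK = 0)).resolve_left hw

/-- Section 4.1: every quaternionic representation of a commutative group can be
conjugated into the complex numbers, i.e. every conjugacy class in
`Hom(Γ, ℍˣ)/ℍˣ` contains a complex representation. -/
theorem abelian_quaternionic_rep_conjugate_to_complex
    (G : Type*) [CommGroup G] (h : G →* Hˣ) :
    ∃ q : Hˣ, ∀ g : G, ∃ z : ℂ, z ≠ 0 ∧ ((q⁻¹ * h g * q : Hˣ) : H) = toH z := by
  suffices ∃ q : Hˣ, ∀ g : G, ∃ z : ℂ, ((q⁻¹ * h g * q : Hˣ) : H) = toH z by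
    obtain ⟨q, hq⟩ := this
    refine ⟨q, fun g => ?_⟩
    obtain ⟨z, hz⟩ := hq g
    refine ⟨z, ?_, hz⟩
    rintro rfl
    exact (q⁻¹ * h g * q).ne_zero hz
  by_cases hreal : ∀ g, (h g : H).imI = 0 ∧ (h g : H).imJ = 0 ∧ (h g : H).imK = 0
  · refine ⟨1, fun g => ⟨⟨(h g : H).re, 0⟩, ?_⟩⟩
    obtain ⟨hI, hJ, hK⟩ := hreal g
    ext <;> simp [hI, hJ, hK]
  · obtain ⟨g₀, hg₀⟩ := not_forall.mp hreal
    obtain ⟨q, w, hw, hqw⟩ := exists_unit_mul_eq_mul_toH _ hg₀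
    refine ⟨q, fun g => exists_eq_toH_of_commute _ w hw ?_⟩
    have hconj : toH w = ((q⁻¹ * h g₀ * q : Hˣ) : H) := by
      rw [Units.val_mul, Units.val_mul, mul_assoc, hqw, Units.inv_mul_cancel_left]
    have hcomm : h g * h g₀ = h g₀ * h g := by rw [← map_mul, ← map_mul, mul_comm]
    rw [hconj, commute_iff_eq, ← Units.val_mul, ← Units.val_mul]
    congr 1
    simp only [mul_assoc, mul_inv_cancel_left]
    rw [← mul_assoc (h g), hcomm, mul_assoc]
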